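/- arXiv:1501.03363 — 2 statements merged into one kernel-verified Lean document; each statement's English description precedes it below -/
import Mathlib

section
/- Let p, q > 0 be real numbers and set ξ = p + q. Assume the rational-parameter setup and additionally that ∑_{m=1}^{M⁺} M_m + ∑_{n=1}^{N⁻} N_n = 2 + ∑_{k=1}^{m⁺} m_k + ∑_{k=1}^{n⁻} n_k. Let H_{mi} ∈ ℂ (1 ≤ m ≤ M⁺, 1 ≤ i ≤ M_m) and G_{ni} ∈ ℂ (1 ≤ n ≤ N⁻, 1 ≤ i ≤ N_n), and define f₁(x) = ∑_{m=1}^{M⁺} ∑_{i=1}^{M_m} H_{mi}·(−1)^i/(x−β_m)^i + ∑_{n=1}^{N⁻} ∑_{i=1}^{N_n} G_{ni}/(x+γ_n)^i + (p/ξ)/x for x ∈ ℂ ∖ ({0} ∪ {β₁,…,β_{M⁺}} ∪ {−γ₁,…,−γ_{N⁻}}). Suppose that: (i) for every 1 ≤ k ≤ m⁺ and every 0 ≤ j ≤ m_k − 1, iteratedDeriv j f₁ (η_k) = 0; (ii) for every 1 ≤ k ≤ n⁻ and every 0 ≤ j ≤ n_k − 1, iteratedDeriv j f₁ (−ϑ_k)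 = 0; (iii) ∑_{n=1}^{N⁻} G_{n1} + p/ξ = ∑_{m=1}^{M⁺} H_{m1}; (iv) −∑_{n=1}^{N⁻} G_{n1}·γ_n + ∑_{n : N_n ≥ 2} G_{n2} = ∑_{m=1}^{M⁺} H_{m1}·β_m − ∑_{m : M_m ≥ 2} H_{m2}. Then f₁(x) = f(x) for every x ∈ ℂ ∖ ({0} ∪ {β₁,…,β_{M⁺}} ∪ {−γ₁,…,−γ_{N⁻}}), where f is the rational function of formula (3.4). -/
open Finset Complex

/-!
Clear denominators: `f₁ = N / D`, where `D` is the product of the pole factors, the simple pole at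
`0` included. Multiplying a partial fraction by `x` gives another partial fraction with the same
poles plus a constant, the sum of the residues; the two matching conditions say that this constant
vanishes both for `f₁` and for `x * f₁`, so `x ^ 2 * N` still has degree less than `deg D`. The
vanishing conditions say that the zero product `Z` divides `N`, and `deg Z = deg D - 3` leaves only
`N = r * Z` with `r` constant. Comparing both sides at the pole `0` determines `r`.
-/

section Algebra

open Polynomial

variable {ι R : Type*} [Fintype ι] [CommRing R] (a : ι → R) (A : ι → ℕ) (K : ι → ℕ → R)

/-- The monic polynomial with root `a i` of multiplicity `A i`. It serves both as the common
denominator of a partial fraction and as the zero factor of its numerator. -/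
noncomputable def rootProd : R[X] := ∏ i, (X - C (a i)) ^ A i

theorem rootProd_monic : (rootProd a A).Monic :=
  monic_prod_of_monic _ _ fun i _ => (monic_X_sub_C (a i)).pow (A i)

theorem natDegree_rootProd [Nontrivial R] : (rootProd a A).natDegree = ∑ i, A i := by
  rw [rootProd, natDegree_prod_of_monic _ _ fun i _ => (monic_X_sub_C (a i)).pow (A i)]
  simp [(monic_X_sub_C _).natDegree_pow]

theorem eval_rootProd (x : R) : (rootProd a A).eval x = ∏ i, (x - a i) ^ A i := by
  simp [rootProd, eval_prod]

theorem eval_rootProd_ne_zero [IsDomain R] {x : R} (hx : ∀ i, x ≠ a i) :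
    (rootProd a A).eval x ≠ 0 := by
  rw [eval_rootProd]
  exact prod_ne_zero_iff.2 fun i _ => pow_ne_zero _ (sub_ne_zero.2 (hx i))

theorem rootProd_dvd_of_forall_pow_dvd {k : Type*} [Field k] {b : ι → k} {B : ι → ℕ} {P : k[X]}
    (hb : Function.Injective b) (hP : ∀ i, (X - C (b i)) ^ B i ∣ P) : rootProd b B ∣ P :=
  prod_dvd_of_coprime (fun _ _ _ _ hij => (pairwise_coprime_X_sub_C hb hij).pow) fun i _ => hP i

variable [DecidableEq ι]

/-- The polynomial `rootProd a A / (X - C (a i)) ^ j`, by which the term `K i j / (x - a i) ^ j` is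
multiplied when a partial fraction is put over its common denominator. It is the intended quotient
only for `j ≤ A i`. -/
noncomputable def cofactor (i : ι) (j : ℕ) : R[X] :=
  (X - C (a i)) ^ (A i - j) * ∏ k ∈ univ.erase i, (X - C (a k)) ^ A k

theorem X_sub_C_mul_cofactor_succ {i : ι} {j : ℕ} (hj : j < A i) :
    (X - C (a i)) * cofactor a A i (j + 1) = cofactor a A i j := by
  rw [cofactor, cofactor, ← mul_assoc, ← pow_succ', show A i - (j + 1) + 1 = A i - j by lia]

theorem X_sub_C_pow_mul_cofactor {i : ι} {j : ℕ} (hj : j ≤ A i) :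
    (X - C (a i)) ^ j * cofactor a A i j = rootProd a A := by
  rw [cofactor, ← mul_assoc, ← pow_add, Nat.add_sub_cancel' hj]
  exact mul_prod_erase univ (fun k => (X - C (a k)) ^ A k) (mem_univ i)

theorem cofactor_zero (i : ι) : cofactor a A i 0 = rootProd a A := by
  simpa using X_sub_C_pow_mul_cofactor a A (Nat.zero_le (A i))

theorem natDegree_cofactor_le (i : ι) (j : ℕ) :
    (cofactor a A i j).natDegree ≤ A i - j + ∑ k ∈ univ.erase i, A k := by
  have hpow (k : ι) (l : ℕ) : ((X - C (a k)) ^ l).natDegree ≤ l := by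
    simpa using natDegree_pow_le_of_le l (natDegree_X_sub_C_le (a k))
  exact natDegree_mul_le_of_le (hpow i _)
    ((natDegree_prod_le _ _).trans (sum_le_sum fun k _ => hpow k (A k)))

theorem cofactor_mem_degreeLT {i : ι} {j : ℕ} (hj : j ∈ Icc 1 (A i)) :
    cofactor a A i j ∈ degreeLT R (∑ k, A k) := by
  obtain ⟨h1, hA⟩ := mem_Icc.1 hj
  have hlt : A i - j + ∑ k ∈ univ.erase i, A k < ∑ k, A k := by
    rw [← add_sum_erase univ A (mem_univ i)]
    lia
  rw [mem_degreeLT]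
  exact degree_le_natDegree.trans_lt
    (Nat.cast_lt.2 ((natDegree_cofactor_le a A i j).trans_lt hlt))

/-- The numerator of the partial fraction `∑ i, ∑ j ∈ Icc 1 (A i), K i j / (x - a i) ^ j` over the
common denominator `rootProd a A`. -/
noncomputable def partialFractionNumerator : R[X] :=
  ∑ i, ∑ j ∈ Icc 1 (A i), C (K i j) * cofactor a A i j

theorem partialFractionNumerator_mem_degreeLT :
    partialFractionNumerator a A K ∈ degreeLT R (∑ i, A i) :=
  sum_mem fun i _ => sum_mem fun j hj => by
    rw [← smul_eq_C_mul]
    exact Submodule.smul_mem _ _ (cofactor_mem_degreeLT a A hj)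

theorem eval_partialFractionNumerator_pole {i : ι} (hi : 1 ≤ A i) :
    (partialFractionNumerator a A K).eval (a i) =
      K i (A i) * ∏ k ∈ univ.erase i, (a i - a k) ^ A k := by
  simp only [partialFractionNumerator, cofactor, eval_finsetSum, eval_mul, eval_C, eval_pow,
    eval_sub, eval_X, eval_prod]
  rw [sum_eq_single_of_mem i (mem_univ i), sum_eq_single_of_mem (A i) (right_mem_Icc.2 hi)]
  · simp
  · intro j hj hjA
    have hexp : A i - j ≠ 0 := by grind
    simp [hexp]
  · intro l _ hl
    have hfactor : ∏ k ∈ univ.erase l, (a i - a k) ^ A k = 0 :=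
      prod_eq_zero (mem_erase.2 ⟨hl.symm, mem_univ i⟩) (by simp [Nat.ne_of_gt hi])
    simp [hfactor]

/-- The coefficients of `x * ∑ i, ∑ j ∈ Icc 1 (A i), K i j / (x - a i) ^ j` as a partial fraction,
its constant part left out, coming from `x / (x - a) ^ j = 1 / (x - a) ^ (j - 1) + a / (x - a) ^ j`.
The values `K i j` with `j > A i` are not coefficients, hence the truncation. Multiplication by `x`
moves the expansion at infinity by one place, so `∑ i, (shiftCoeff a A)^[l] K i 1` is the
coefficient of `1 / x ^ (l + 1)` in that expansion. -/
def shiftCoeff (i : ι) (j : ℕ) : R := (if j + 1 ≤ A i then K i (j + 1) else 0) + a i * K i j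

theorem sum_Icc_smul_shift {S M : Type*} [Semiring S] [AddCommMonoid M] [Module S M] (c : ℕ → S)
    (v : ℕ → M) {n : ℕ} (hn : 1 ≤ n) :
    c 1 • v 0 + ∑ j ∈ Icc 1 n, (if j + 1 ≤ n then c (j + 1) else 0) • v j =
      ∑ j ∈ Icc 1 n, c j • v (j - 1) := by
  have hfilter : {j ∈ Icc 1 n | j + 1 ≤ n} = Ico 1 n := by grind
  simp only [ite_smul, zero_smul, ← sum_filter, hfilter]
  rw [← Ico_add_one_right_eq_Icc, sum_eq_sum_Ico_succ_bot (Nat.lt_add_one_of_le hn),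
    ← sum_Ico_add']
  simp only [Nat.sub_self, Nat.add_sub_cancel]

theorem X_mul_partialFractionNumerator (hA : ∀ i, 1 ≤ A i) :
    X * partialFractionNumerator a A K = C (∑ i, K i 1) * rootProd a A +
      partialFractionNumerator a A (shiftCoeff a A K) := by
  simp only [partialFractionNumerator, mul_sum, map_sum, sum_mul, ← sum_add_distrib]
  refine sum_congr rfl fun i _ => ?_
  have hX : ∀ j ∈ Icc 1 (A i), X * (C (K i j) * cofactor a A i j) =
      K i j • cofactor a A i (j - 1) + C (a i * K i j) * cofactor a A i j := by
    intro j hj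
    obtain ⟨l, rfl⟩ := Nat.exists_eq_add_of_le' (mem_Icc.1 hj).1
    rw [Nat.add_sub_cancel, ← X_sub_C_mul_cofactor_succ a A (mem_Icc.1 hj).2, smul_eq_C_mul, C_mul]
    ring
  rw [sum_congr rfl hX, sum_add_distrib, ← sum_Icc_smul_shift (K i) (cofactor a A i) (hA i)]
  simp only [shiftCoeff, C_add, add_mul, sum_add_distrib, cofactor_zero, smul_eq_C_mul, add_assoc]

theorem X_pow_mul_partialFractionNumerator (hA : ∀ i, 1 ≤ A i) {s : ℕ}
    (hK : ∀ l < s, ∑ i, (shiftCoeff a A)^[l] K i 1 = 0) :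
    X ^ s * partialFractionNumerator a A K =
      partialFractionNumerator a A ((shiftCoeff a A)^[s] K) := by
  induction s with
  | zero => simp
  | succ s ih =>
    rw [pow_succ', mul_assoc, ih fun l hl => hK l (hl.trans s.lt_succ_self),
      X_mul_partialFractionNumerator a A _ hA, hK s s.lt_succ_self, C_0, zero_mul, zero_add,
      Function.iterate_succ_apply']

variable {a A K} in
theorem exists_partialFractionNumerator_eq_C_mul_rootProd [IsDomain R] {κ : Type*} [Fintype κ]
    {b : κ → R} {B : κ → ℕ} {s : ℕ} (hA : ∀ i, 1 ≤ A i)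
    (hdeg : ∑ i, A i ≤ ∑ k, B k + s + 1)
    (hK : ∀ l < s, ∑ i, (shiftCoeff a A)^[l] K i 1 = 0)
    (hdvd : rootProd b B ∣ partialFractionNumerator a A K) :
    ∃ r, partialFractionNumerator a A K = C r * rootProd b B := by
  obtain ⟨Q, hQ⟩ := hdvd
  have hlt : (X ^ s * (rootProd b B * Q)).degree < ↑(∑ i, A i) := by
    rw [← hQ, X_pow_mul_partialFractionNumerator a A K hA hK]
    exact mem_degreeLT.1 (partialFractionNumerator_mem_degreeLT a A _)
  have hQ0 : Q.natDegree = 0 := by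
    by_cases hzero : Q = 0
    · simp [hzero]
    have hmonic : (X ^ s * rootProd b B).Monic := (monic_X_pow s).mul (rootProd_monic b B)
    rw [← mul_assoc, ← natDegree_lt_iff_degree_lt (mul_ne_zero hmonic.ne_zero hzero),
      hmonic.natDegree_mul' hzero, (monic_X_pow s).natDegree_mul (rootProd_monic b B),
      natDegree_X_pow, natDegree_rootProd] at hlt
    lia
  obtain ⟨r, rfl⟩ := natDegree_eq_zero.1 hQ0
  exact ⟨r, hQ.trans (mul_comm _ _)⟩

end Algebra

section Analysis

open Polynomial

variable {𝕜 : Type*} [NontriviallyNormedField 𝕜]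

theorem iteratedDeriv_polynomial_eval (P : 𝕜[X]) (j : ℕ) :
    iteratedDeriv j (fun x => P.eval x) = fun x => (derivative^[j] P).eval x := by
  induction j with
  | zero => simp
  | succ j ih =>
    rw [iteratedDeriv_succ, ih, Function.iterate_succ_apply']
    exact funext fun x => (derivative^[j] P).deriv

theorem X_sub_C_pow_dvd_of_iteratedDeriv_eval_eq_zero [CharZero 𝕜] {P : 𝕜[X]} {b : 𝕜} {n : ℕ}
    (hP : ∀ j < n, iteratedDeriv j (fun x => P.eval x) b = 0) : (X - C b) ^ n ∣ P := by
  rcases eq_or_ne P 0 with rfl | hP0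
  · exact dvd_zero _
  rcases n with _ | n
  · simp
  rw [← le_rootMultiplicity_iff hP0, Nat.succ_le_iff,
    lt_rootMultiplicity_iff_isRoot_iterate_derivative hP0]
  intro j hj
  simpa only [iteratedDeriv_polynomial_eval, IsRoot.def] using hP j (Nat.lt_succ_of_le hj)

theorem iteratedDeriv_mul_eq_zero {f g : 𝕜 → 𝕜} {b : 𝕜} {n : ℕ} (hf : ContDiffAt 𝕜 n f b)
    (hg : ContDiffAt 𝕜 n g b) (hzero : ∀ j ≤ n, iteratedDeriv j g b = 0) :
    iteratedDeriv n (fun x => f x * g x) b = 0 := by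
  rw [iteratedDeriv_fun_mul hf hg]
  exact sum_eq_zero fun i _ => by rw [hzero (n - i) (Nat.sub_le n i), mul_zero]

variable {ι : Type*} [Fintype ι] (a : ι → 𝕜) (A : ι → ℕ) (K : ι → ℕ → 𝕜)

/-- The rational function with poles `a i` of order at most `A i`, vanishing at infinity, whose
principal part at `a i` has the coefficients `K i j`, `1 ≤ j ≤ A i`. -/
def partialFraction (x : 𝕜) : 𝕜 := ∑ i, ∑ j ∈ Icc 1 (A i), K i j / (x - a i) ^ j

theorem contDiffAt_partialFraction {b : 𝕜} (hb : ∀ i, b ≠ a i) {n : WithTop ℕ∞} :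
    ContDiffAt 𝕜 n (partialFraction a A K) b :=
  ContDiffAt.sum fun i _ => ContDiffAt.sum fun j _ =>
    contDiffAt_const.div ((contDiffAt_id.sub contDiffAt_const).pow j)
      (pow_ne_zero j (sub_ne_zero.2 (hb i)))

variable [DecidableEq ι]

theorem eval_rootProd_mul_partialFraction {x : 𝕜} (hx : ∀ i, x ≠ a i) :
    (rootProd a A).eval x * partialFraction a A K x =
      (partialFractionNumerator a A K).eval x := by
  simp only [partialFraction, partialFractionNumerator, eval_finsetSum, mul_sum]
  refine sum_congr rfl fun i _ => sum_congr rfl fun j hj => ?_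
  rw [← X_sub_C_pow_mul_cofactor a A (mem_Icc.1 hj).2]
  have hxi : x - a i ≠ 0 := sub_ne_zero.2 (hx i)
  simp only [eval_mul, eval_pow, eval_sub, eval_X, eval_C]
  field_simp

theorem X_sub_C_pow_dvd_partialFractionNumerator [CharZero 𝕜] {b : 𝕜} {n : ℕ}
    (hb : ∀ i, b ≠ a i) (hzero : ∀ j < n, iteratedDeriv j (partialFraction a A K) b = 0) :
    (X - C b) ^ n ∣ partialFractionNumerator a A K := by
  have hnumer : (fun x => (partialFractionNumerator a A K).eval x) =ᶠ[nhds b]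
      fun x => (rootProd a A).eval x * partialFraction a A K x := by
    filter_upwards [Filter.eventually_all.2 fun i => eventually_ne_nhds (hb i)] with x hx
    exact (eval_rootProd_mul_partialFraction a A K hx).symm
  refine X_sub_C_pow_dvd_of_iteratedDeriv_eval_eq_zero fun j hj => ?_
  have hD : ContDiff 𝕜 j (fun x => (rootProd a A).eval x) := by
    simpa using (rootProd a A).contDiff_aeval (𝕜 := 𝕜) j
  rw [hnumer.iteratedDeriv_eq j]
  exact iteratedDeriv_mul_eq_zero hD.contDiffAt
    (contDiffAt_partialFraction a A K hb) fun i hi => hzero i (hi.trans_lt hj)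

variable {a A K} in
theorem partialFraction_eq_prod_div_prod [CharZero 𝕜] {κ : Type*} [Fintype κ] {b : κ → 𝕜}
    {B : κ → ℕ} {s : ℕ} (i : ι) (hA : ∀ i, 1 ≤ A i) (hb : Function.Injective b)
    (hba : ∀ k i, b k ≠ a i) (hdeg : ∑ i, A i ≤ ∑ k, B k + s + 1)
    (hzero : ∀ k, ∀ j < B k, iteratedDeriv j (partialFraction a A K) (b k) = 0)
    (hK : ∀ l < s, ∑ i, (shiftCoeff a A)^[l] K i 1 = 0) {x : 𝕜} (hx : ∀ i, x ≠ a i) :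
    partialFraction a A K x =
      K i (A i) * (∏ k ∈ univ.erase i, (a i - a k) ^ A k) * (∏ k, (x - b k) ^ B k) /
        ((∏ k, (a i - b k) ^ B k) * ∏ k, (x - a k) ^ A k) := by
  obtain ⟨r, hr⟩ := exists_partialFractionNumerator_eq_C_mul_rootProd hA hdeg hK
    (rootProd_dvd_of_forall_pow_dvd hb fun k =>
      X_sub_C_pow_dvd_partialFractionNumerator a A K (hba k) (hzero k))
  have hfx := eval_rootProd_mul_partialFraction a A K hx
  have hpole := eval_partialFractionNumerator_pole a A K (hA i)
  rw [hr, eval_mul, eval_C] at hfx hpole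
  rw [← hpole, ← eval_rootProd, ← eval_rootProd, ← eval_rootProd,
    eq_div_iff (mul_ne_zero (eval_rootProd_ne_zero b B fun k => (hba k i).symm)
      (eval_rootProd_ne_zero a A hx))]
  linear_combination (rootProd b B).eval (a i) * hfx

omit [DecidableEq ι] in
variable {a A K} in
theorem partialFraction_add_div_eq_prod_div_prod [CharZero 𝕜] {κ : Type*} [Fintype κ]
    {b : κ → 𝕜} {B : κ → ℕ} {c : 𝕜} (hA : ∀ i, 1 ≤ A i) (hb : Function.Injective b)
    (hb0 : ∀ k, b k ≠ 0) (hba : ∀ k i, b k ≠ a i) (hdeg : ∑ i, A i ≤ 2 + ∑ k, B k)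
    (hzero : ∀ k, ∀ j < B k, iteratedDeriv j (fun x => partialFraction a A K x + c / x) (b k) = 0)
    (hK₁ : ∑ i, K i 1 + c = 0) (hK₂ : ∑ i, K i 1 * a i + ∑ i with 2 ≤ A i, K i 2 = 0)
    {x : 𝕜} (hx0 : x ≠ 0) (hx : ∀ i, x ≠ a i) :
    partialFraction a A K x + c / x = c * ((∏ i, (-a i) ^ A i) * ∏ k, (x - b k) ^ B k) /
      ((∏ k, (-b k) ^ B k) * x * ∏ i, (x - a i) ^ A i) := by
  classical
  let a' (i : Option ι) : 𝕜 := i.elim 0 a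
  let A' (i : Option ι) : ℕ := i.elim 1 A
  let K' (i : Option ι) : ℕ → 𝕜 := i.elim (fun _ => c) K
  have hsplit (y : 𝕜) : partialFraction a' A' K' y = partialFraction a A K y + c / y := by
    simp [partialFraction, a', A', K', add_comm]
  have hK' : ∀ l < 2, ∑ i, (shiftCoeff a' A')^[l] K' i 1 = 0 := by
    intro l hl
    interval_cases l
    · simpa [K', add_comm] using hK₁
    · rw [sum_filter, add_comm, ← sum_add_distrib] at hK₂
      simp only [Function.iterate_one, shiftCoeff, Fintype.sum_option, a', A', K', Option.elim,
        mul_comm (a _), zero_mul, Nat.reduceAdd, Nat.not_ofNat_le_one, if_false, add_zero, zero_add]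
      exact hK₂
  have hother : univ.erase (none : Option ι) = univ.map Function.Embedding.some := by
    ext i; cases i <;> simp
  rw [← hsplit, partialFraction_eq_prod_div_prod (b := b) (B := B) none
    (Option.forall.2 ⟨le_rfl, hA⟩) hb (fun k => Option.forall.2 ⟨hb0 k, hba k⟩) ?_ ?_ hK'
    (Option.forall.2 ⟨hx0, hx⟩), hother]
  · simp [a', A', K', mul_assoc]
  · simp only [Fintype.sum_option, A', Option.elim]
    lia
  · simpa only [funext hsplit] using hzero

end Analysis

theorem paper_thm_3_1_step3_general {𝕜 : Type*} [NontriviallyNormedField 𝕜] [CharZero 𝕜]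
    {ιβ ιγ ιη ιϑ : Type*} [Fintype ιβ] [Fintype ιγ] [Fintype ιη] [Fintype ιϑ] (c : 𝕜)
    (β : ιβ → 𝕜) (M : ιβ → ℕ) (γ : ιγ → 𝕜) (N : ιγ → ℕ)
    (η : ιη → 𝕜) (m : ιη → ℕ) (ϑ : ιϑ → 𝕜) (n : ιϑ → ℕ)
    (hM : ∀ k, 1 ≤ M k) (hN : ∀ k, 1 ≤ N k)
    (hηinj : Function.Injective η) (hϑinj : Function.Injective ϑ) (hηϑ : ∀ k j, η k ≠ -ϑ j)
    (hη0 : ∀ k, η k ≠ 0) (hϑ0 : ∀ k, ϑ k ≠ 0)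
    (hηβ : ∀ k j, η k ≠ β j) (hηγ : ∀ k j, η k ≠ -γ j)
    (hβϑ : ∀ k j, β k ≠ -ϑ j) (hϑγ : ∀ k j, ϑ k ≠ γ j)
    (hdeg : ∑ k, M k + ∑ k, N k ≤ 2 + ∑ k, m k + ∑ k, n k)
    (H : ιβ → ℕ → 𝕜) (G : ιγ → ℕ → 𝕜) (f₁ f : 𝕜 → 𝕜)
    (hf₁ : ∀ x, f₁ x =
      ∑ k, ∑ i ∈ Icc 1 (M k), H k i * (-1) ^ i / (x - β k) ^ i
        + ∑ k, ∑ i ∈ Icc 1 (N k), G k i / (x + γ k) ^ i + c / x)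
    (hf : ∀ x, f x =
      c * ((∏ k, (-β k) ^ M k) * (∏ k, γ k ^ N k) *
          (∏ k, (x - η k) ^ m k) * ∏ k, (x + ϑ k) ^ n k) /
        ((∏ k, (-η k) ^ m k) * (∏ k, ϑ k ^ n k) * x *
          (∏ k, (x - β k) ^ M k) * ∏ k, (x + γ k) ^ N k))
    (hvanη : ∀ k, ∀ j < m k, iteratedDeriv j f₁ (η k) = 0)
    (hvanϑ : ∀ k, ∀ j < n k, iteratedDeriv j f₁ (-ϑ k) = 0)
    (hmatch1 : ∑ k, G k 1 + c = ∑ k, H k 1)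
    (hmatch2 : -∑ k, G k 1 * γ k + ∑ k with 2 ≤ N k, G k 2 =
      ∑ k, H k 1 * β k - ∑ k with 2 ≤ M k, H k 2) :
    ∀ x, x ≠ 0 → (∀ k, x ≠ β k) → (∀ k, x ≠ -γ k) → f₁ x = f x := by
  intro x hx0 hxβ hxγ
  let a := Sum.elim β (-γ)
  let A := Sum.elim M N
  let K := Sum.elim (fun k i => H k i * (-1) ^ i) G
  have hf₁' : f₁ = fun y => partialFraction a A K y + c / y := by
    funext y
    simp [hf₁, partialFraction, a, A, K]
  have hb : Function.Injective (Sum.elim η (-ϑ)) :=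
    hηinj.sumElim (neg_injective.comp hϑinj) hηϑ
  have hba : ∀ k i, Sum.elim η (-ϑ) k ≠ a i := by
    rintro (k | k) (i | i)
    exacts [hηβ k i, hηγ k i, (hβϑ i k).symm, neg_injective.ne (hϑγ k i)]
  have hK₁ : ∑ i, K i 1 + c = 0 := by
    have hsum : ∑ i, K i 1 = ∑ k, G k 1 - ∑ k, H k 1 := by simp [K, neg_add_eq_sub]
    linear_combination hsum + hmatch1
  have hK₂ : ∑ i, K i 1 * a i + ∑ i with 2 ≤ A i, K i 2 = 0 := by
    have hfirst : ∑ i, K i 1 * a i = -∑ k, H k 1 * β k - ∑ k, G k 1 * γ k := by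
      simp [K, a, sub_eq_add_neg]
    have hsecond : ∑ i with 2 ≤ A i, K i 2 =
        ∑ k with 2 ≤ M k, H k 2 + ∑ k with 2 ≤ N k, G k 2 := by
      simp only [sum_filter, Fintype.sum_sum_type, K, A, Sum.elim_inl, Sum.elim_inr,
        even_two.neg_one_pow, mul_one]
      -- the two sides differ in the `Decidable` instances of `if`
      rfl
    linear_combination hfirst + hsecond + hmatch2
  rw [hf₁'] at hvanη hvanϑ
  rw [hf₁', hf]
  dsimp only
  rw [partialFraction_add_div_eq_prod_div_prod (b := Sum.elim η (-ϑ)) (B := Sum.elim m n)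
    (Sum.forall.2 ⟨hM, hN⟩) hb (Sum.forall.2 ⟨hη0, fun k => neg_ne_zero.2 (hϑ0 k)⟩) hba
    (by simpa [A, add_assoc] using hdeg) (Sum.forall.2 ⟨hvanη, hvanϑ⟩) hK₁ hK₂ hx0
    (Sum.forall.2 ⟨hxβ, hxγ⟩)]
  simp [a, A, mul_assoc]

theorem ne_neg_of_re_pos {z w : ℂ} (hz : 0 < z.re) (hw : 0 < w.re) : z ≠ -w :=
  ne_of_apply_ne re (((neg_lt_zero.2 hw).trans hz).ne')

/-- Step 3 of the proof of Theorem 3.1: any partial-fraction function `f₁` (formula (3.20))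
satisfying the vanishing conditions (3.15), (3.18) at the `η_k` and `−ϑ_k` and the matching
conditions (3.10), (3.11) must equal the explicit rational function `f` of formula (3.4). -/
theorem paper_thm_3_1_step3 (p q : ℝ) (hp : 0 < p) (hq : 0 < q)
    (Mp Nm mp nm : ℕ)
    (β : Fin Mp → ℂ) (M : Fin Mp → ℕ)
    (γ : Fin Nm → ℂ) (N : Fin Nm → ℕ)
    (η : Fin mp → ℂ) (m : Fin mp → ℕ)
    (ϑ : Fin nm → ℂ) (n : Fin nm → ℕ)
    (hβinj : Function.Injective β) (hβre : ∀ k, 0 < (β k).re) (hM : ∀ k, 1 ≤ M k)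
    (hγinj : Function.Injective γ) (hγre : ∀ k, 0 < (γ k).re) (hN : ∀ k, 1 ≤ N k)
    (hηinj : Function.Injective η) (hηre : ∀ k, 0 < (η k).re) (hm : ∀ k, 1 ≤ m k)
    (hϑinj : Function.Injective ϑ) (hϑre : ∀ k, 0 < (ϑ k).re) (hn : ∀ k, 1 ≤ n k)
    (hηβ : ∀ k j, η k ≠ β j) (hϑγ : ∀ k j, ϑ k ≠ γ j)
    (hdeg : ∑ k, M k + ∑ k, N k = 2 + ∑ k, m k + ∑ k, n k)
    (H : Fin Mp → ℕ → ℂ) (G : Fin Nm → ℕ → ℂ) (f₁ f : ℂ → ℂ)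
    (hf₁ : ∀ x : ℂ, f₁ x =
      ∑ mm, ∑ i ∈ Finset.Icc 1 (M mm), H mm i * (-1) ^ i / (x - β mm) ^ i
        + ∑ nn, ∑ i ∈ Finset.Icc 1 (N nn), G nn i / (x + γ nn) ^ i
        + ((p : ℂ) / ((p : ℂ) + (q : ℂ))) / x)
    (hf : ∀ x : ℂ, f x =
      ((p : ℂ) / ((p : ℂ) + (q : ℂ))) *
        ((∏ mm, (-β mm) ^ M mm) * (∏ nn, γ nn ^ N nn) *
          (∏ k, (x - η k) ^ m k) * ∏ k, (x + ϑ k) ^ n k) /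
        ((∏ k, (-η k) ^ m k) * (∏ k, ϑ k ^ n k) * x *
          (∏ mm, (x - β mm) ^ M mm) * ∏ nn, (x + γ nn) ^ N nn))
    (hvanη : ∀ k : Fin mp, ∀ j < m k, iteratedDeriv j f₁ (η k) = 0)
    (hvanϑ : ∀ k : Fin nm, ∀ j < n k, iteratedDeriv j f₁ (-ϑ k) = 0)
    (hmatch1 : ∑ nn, G nn 1 + (p : ℂ) / ((p : ℂ) + (q : ℂ)) = ∑ mm, H mm 1)
    (hmatch2 : -∑ nn, G nn 1 * γ nn
        + ∑ nn ∈ Finset.univ.filter (fun nn => 2 ≤ N nn), G nn 2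
      = ∑ mm, H mm 1 * β mm
        - ∑ mm ∈ Finset.univ.filter (fun mm => 2 ≤ M mm), H mm 2) :
    ∀ x : ℂ, x ≠ 0 → (∀ mm, x ≠ β mm) → (∀ nn, x ≠ -γ nn) → f₁ x = f x :=
  paper_thm_3_1_step3_general _ β M γ N η m ϑ n hM hN hηinj hϑinj
    (fun k j => ne_neg_of_re_pos (hηre k) (hϑre j)) (fun k => ne_zero_of_re_pos (hηre k))
    (fun k => ne_zero_of_re_pos (hϑre k)) hηβ (fun k j => ne_neg_of_re_pos (hηre k) (hγre j))
    (fun k j => ne_neg_of_re_pos (hβre k) (hϑre j)) hϑγ hdeg.le H G f₁ f hf₁ hf hvanη hvanϑ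
    hmatch1 hmatch2
end

section
/- Let β₁,…,β_{M⁺} be pairwise distinct complex numbers with positive real parts, with multiplicities M₁,…,M_{M⁺} ≥ 1, and let γ₁,…,γ_{N⁻} be pairwise distinct complex numbers with positive real parts, with multiplicities N₁,…,N_{N⁻} ≥ 1. Let H_{mi} ∈ ℂ (1 ≤ m ≤ M⁺, 1 ≤ i ≤ M_m), G_{ni} ∈ ℂ (1 ≤ n ≤ N⁻, 1 ≤ i ≤ N_n), c ∈ ℂ, and b ∈ ℝ. Define W : ℝ → ℂ by W(x) = 1 − c + ∑_{m=1}^{M⁺} ∑_{i=1}^{M_m} H_{mi}·((b−x)^{i−1}/(i−1)!)·e^{β_m(x−b)} for x < b, and W(x) = 1 + ∑_{n=1}^{N⁻} ∑_{i=1}^{N_n} G_{ni}·((x−b)^{i−1}/(i−1)!)·e^{γ_n(b−x)} for x ≥ b. Then for every φ ∈ ℂ with −min_{1≤n≤N⁻} Re(γ_n) < Re(φ) < 0, the function x ↦ e^{−φ(x−b)}·(W(x) − 1) is integrable on ℝ and ∫_{−∞}^{∞} e^{−φ(x−b)}·(W(x) − 1) dx = ∑_{m=1}^{M⁺} ∑_{i=1}^{M_m}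 H_{mi}·(−1)^i/(φ−β_m)^i + ∑_{n=1}^{N⁻} ∑_{i=1}^{N_n} G_{ni}/(φ+γ_n)^i + c/φ. -/
open MeasureTheory Finset Complex

/-!
Splitting the line at `b` and substituting `x = b - t`, respectively `x = b + t`, turns the
two-sided transform into the one-sided Laplace transform of `t ↦ W (b - t) - 1` at `-φ` plus that
of `t ↦ W (b + t) - 1` at `φ`. Both are exponential polynomials up to a constant, so everything
reduces to the transform `1 / s ^ (k + 1)` of `t ^ k / k!` and the shift `s ↦ s + a` produced by a
factor `exp (-a t)`. The former follows by induction on `k` from the rule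
`L[deriv f](s) = s L[f](s) - f 0`.
-/

section HalfLines

variable {E : Type*} [NormedAddCommGroup E]

theorem integrableOn_Iio_iff_comp_const_sub {f : ℝ → E} (b : ℝ) :
    IntegrableOn f (Set.Iio b) ↔ IntegrableOn (fun t ↦ f (b - t)) (Set.Ioi 0) := by
  have h := (volume.measurePreserving_sub_left b).integrableOn_comp_preimage
    (MeasurableEquiv.subLeft b).measurableEmbedding (f := f) (s := Set.Iio b)
  rw [Set.preimage_const_sub_Iio, sub_self] at h
  exact h.symm

theorem integrableOn_Ioi_iff_comp_const_add {f : ℝ → E} (b : ℝ) :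
    IntegrableOn f (Set.Ioi b) ↔ IntegrableOn (fun t ↦ f (b + t)) (Set.Ioi 0) := by
  have h := (measurePreserving_add_left volume b).integrableOn_comp_preimage
    (MeasurableEquiv.addLeft b).measurableEmbedding (f := f) (s := Set.Ioi b)
  rw [Set.preimage_const_add_Ioi, sub_self] at h
  exact h.symm

theorem integrable_iff_integrableOn_Ioi_comp_sub_and_comp_add {f : ℝ → E} (b : ℝ) :
    Integrable f ↔ IntegrableOn (fun t ↦ f (b - t)) (Set.Ioi 0) ∧
      IntegrableOn (fun t ↦ f (b + t)) (Set.Ioi 0) := by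
  rw [← integrableOn_Iio_iff_comp_const_sub, ← integrableOn_Ioi_iff_comp_const_add,
    ← integrableOn_Iic_iff_integrableOn_Iio, ← integrableOn_union, Set.Iic_union_Ioi,
    integrableOn_univ]

variable [NormedSpace ℝ E]

theorem setIntegral_Iio_eq_comp_const_sub (f : ℝ → E) (b : ℝ) :
    ∫ x in Set.Iio b, f x = ∫ t in Set.Ioi (0 : ℝ), f (b - t) := by
  have h := (volume.measurePreserving_sub_left b).setIntegral_preimage_emb
    (MeasurableEquiv.subLeft b).measurableEmbedding f (Set.Iio b)
  rw [Set.preimage_const_sub_Iio, sub_self] at h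
  exact h.symm

theorem setIntegral_Ioi_eq_comp_const_add (f : ℝ → E) (b : ℝ) :
    ∫ x in Set.Ioi b, f x = ∫ t in Set.Ioi (0 : ℝ), f (b + t) := by
  have h := (measurePreserving_add_left volume b).setIntegral_preimage_emb
    (MeasurableEquiv.addLeft b).measurableEmbedding f (Set.Ioi b)
  rw [Set.preimage_const_add_Ioi, sub_self] at h
  exact h.symm

theorem integral_eq_integral_Ioi_comp_sub_add_comp_add {f : ℝ → E} (hf : Integrable f) (b : ℝ) :
    ∫ x, f x = (∫ t in Set.Ioi (0 : ℝ), f (b - t)) + ∫ t in Set.Ioi (0 : ℝ), f (b + t) := by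
  rw [← setIntegral_Iio_eq_comp_const_sub, ← setIntegral_Ioi_eq_comp_const_add,
    ← integral_Iic_eq_integral_Iio,
    intervalIntegral.integral_Iic_add_Ioi hf.integrableOn hf.integrableOn]

end HalfLines

section LaplaceTransform

variable {E : Type*} [NormedAddCommGroup E] [NormedSpace ℂ E]

/-- The one-sided Laplace transform `∫₀^∞ e^{-st} f(t) dt` converges absolutely with value `L`.
The values of `f` on `(-∞, 0]` are irrelevant. -/
def HasLaplaceTransform (f : ℝ → E) (s : ℂ) (L : E) : Prop :=
  IntegrableOn (fun t : ℝ ↦ exp (-s * t) • f t) (Set.Ioi 0) ∧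
    ∫ t in Set.Ioi (0 : ℝ), exp (-s * t) • f t = L

namespace HasLaplaceTransform

variable {f g : ℝ → E} {s : ℂ} {L K : E}

theorem congr (hf : HasLaplaceTransform f s L) (hfg : Set.EqOn f g (Set.Ioi 0)) :
    HasLaplaceTransform g s L := by
  have h : Set.EqOn (fun t : ℝ ↦ exp (-s * t) • f t) (fun t : ℝ ↦ exp (-s * t) • g t)
      (Set.Ioi 0) := fun t ht ↦ congrArg (exp (-s * t) • ·) (hfg ht)
  exact ⟨hf.1.congr_fun h measurableSet_Ioi,
    (setIntegral_congr_fun measurableSet_Ioi h).symm.trans hf.2⟩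

theorem add (hf : HasLaplaceTransform f s L) (hg : HasLaplaceTransform g s K) :
    HasLaplaceTransform (fun t ↦ f t + g t) s (L + K) := by
  simp only [HasLaplaceTransform, smul_add]
  exact ⟨hf.1.add hg.1, by rw [integral_add hf.1 hg.1, hf.2, hg.2]⟩

theorem const_smul (hf : HasLaplaceTransform f s L) (A : ℂ) :
    HasLaplaceTransform (fun t ↦ A • f t) s (A • L) := by
  simp only [HasLaplaceTransform, smul_comm _ A]
  exact ⟨hf.1.smul A, by rw [integral_smul, hf.2]⟩

theorem sum {ι : Type*} {S : Finset ι} {f : ι → ℝ → E} {L : ι → E}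
    (hf : ∀ i ∈ S, HasLaplaceTransform (f i) s (L i)) :
    HasLaplaceTransform (fun t ↦ ∑ i ∈ S, f i t) s (∑ i ∈ S, L i) := by
  simp only [HasLaplaceTransform, Finset.smul_sum]
  refine ⟨integrable_finsetSum S fun i hi ↦ (hf i hi).1, ?_⟩
  rw [integral_finsetSum S fun i hi ↦ (hf i hi).1]
  exact Finset.sum_congr rfl fun i hi ↦ (hf i hi).2

theorem exp_smul {a : ℂ} (hf : HasLaplaceTransform f (s + a) L) :
    HasLaplaceTransform (fun t ↦ exp (-a * t) • f t) s L := by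
  have h (t : ℝ) : exp (-s * t) • exp (-a * t) • f t = exp (-(s + a) * t) • f t := by
    rw [smul_smul, ← exp_add]
    ring_nf
  simpa only [HasLaplaceTransform, h] using hf

theorem eq_smul_sub_of_hasDerivAt [CompleteSpace E] {f' : ℝ → E} {L' : E}
    (hderiv : ∀ t ∈ Set.Ici (0 : ℝ), HasDerivAt f (f' t) t)
    (hf : HasLaplaceTransform f s L) (hf' : HasLaplaceTransform f' s L') :
    L' = s • L - f 0 := by
  have hkernel (t : ℝ) : HasDerivAt (fun t : ℝ ↦ exp (-s * t)) (-s * exp (-s * t)) t := by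
    simpa [mul_comm] using ((hasDerivAt_id (t : ℂ)).const_mul (-s)).cexp.comp_ofReal
  have hprod : ∀ t ∈ Set.Ici (0 : ℝ), HasDerivAt (fun t : ℝ ↦ exp (-s * t) • f t)
      (exp (-s * t) • f' t - s • exp (-s * t) • f t) t := fun t ht ↦ by
    refine ((hkernel t).smul (hderiv t ht)).congr_deriv ?_
    rw [mul_smul, neg_smul, sub_eq_add_neg]
  have hint : IntegrableOn
      (fun t : ℝ ↦ exp (-s * t) • f' t - s • exp (-s * t) • f t) (Set.Ioi 0) :=
    hf'.1.sub (hf.1.smul s)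
  have hlim := tendsto_zero_of_hasDerivAt_of_integrableOn_Ioi
    (fun t ht ↦ hprod t (Set.Ioi_subset_Ici_self ht)) hint hf.1
  have hftc := integral_Ioi_of_hasDerivAt_of_tendsto' hprod hint hlim
  have hsmul : IntegrableOn (fun t : ℝ ↦ s • exp (-s * t) • f t) (Set.Ioi 0) := hf.1.smul s
  rw [integral_sub hf'.1 hsmul, integral_smul, hf.2, hf'.2] at hftc
  calc L' = s • L + (L' - s • L) := (add_sub_cancel _ _).symm
    _ = s • L - f 0 := by rw [hftc]; simp [sub_eq_add_neg]

theorem integrable_and_integral_of_comp_sub_of_comp_add {b : ℝ}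
    (hleft : HasLaplaceTransform (fun t ↦ f (b - t)) (-s) L)
    (hright : HasLaplaceTransform (fun t ↦ f (b + t)) s K) :
    Integrable (fun x : ℝ ↦ exp (-s * (x - b)) • f x) ∧
      ∫ x : ℝ, exp (-s * (x - b)) • f x = L + K := by
  have hsub (t : ℝ) : exp (-s * ((b - t : ℝ) - b)) = exp (-(-s) * t) := by push_cast; ring_nf
  have hadd (t : ℝ) : exp (-s * ((b + t : ℝ) - b)) = exp (-s * t) := by push_cast; ring_nf
  have hint : Integrable (fun x : ℝ ↦ exp (-s * (x - b)) • f x) := by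
    rw [integrable_iff_integrableOn_Ioi_comp_sub_and_comp_add b]
    simpa only [hsub, hadd] using And.intro hleft.1 hright.1
  refine ⟨hint, ?_⟩
  rw [integral_eq_integral_Ioi_comp_sub_add_comp_add hint b]
  simp only [hsub, hadd, hleft.2, hright.2]

end HasLaplaceTransform

theorem integrableOn_exp_mul_pow_Ioi {s : ℂ} (hs : 0 < s.re) (k : ℕ) :
    IntegrableOn (fun t : ℝ ↦ exp (-s * t) * (t : ℂ) ^ k) (Set.Ioi 0) := by
  have hreal := integrableOn_rpow_mul_exp_neg_mul_rpow (s := k)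
    (neg_one_lt_zero.trans_le k.cast_nonneg) one_pos hs
  refine Integrable.mono hreal (by fun_prop) (.of_forall fun t ↦ ?_)
  simp [norm_exp, mul_comm]

theorem hasDerivAt_pow_succ_div_factorial (k : ℕ) (t : ℝ) :
    HasDerivAt (fun t : ℝ ↦ (t : ℂ) ^ (k + 1) / (k + 1).factorial)
      ((t : ℂ) ^ k / k.factorial) t := by
  have h := ((hasDerivAt_pow (k + 1) (t : ℂ)).div_const ((k + 1).factorial : ℂ)).comp_ofReal
  refine h.congr_deriv ?_
  rw [Nat.factorial_succ, Nat.cast_mul, add_tsub_cancel_right,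
    mul_div_mul_left _ _ (Nat.cast_ne_zero.mpr k.succ_ne_zero)]

theorem hasLaplaceTransform_pow_div_factorial {s : ℂ} (hs : 0 < s.re) (k : ℕ) :
    HasLaplaceTransform (fun t ↦ (t : ℂ) ^ k / k.factorial) s (1 / s ^ (k + 1)) := by
  have hs0 : s ≠ 0 := by rintro rfl; simp at hs
  have hconv (k : ℕ) : HasLaplaceTransform (fun t ↦ (t : ℂ) ^ k / k.factorial) s
      (∫ t in Set.Ioi (0 : ℝ), exp (-s * t) • ((t : ℂ) ^ k / k.factorial)) :=
    ⟨by simpa only [IntegrableOn, smul_eq_mul, mul_div_assoc] using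
      (integrableOn_exp_mul_pow_Ioi hs k).div_const (k.factorial : ℂ), rfl⟩
  induction k with
  | zero =>
    refine ⟨(hconv 0).1, ?_⟩
    simpa using integral_exp_mul_complex_Ioi (a := -s) (by simpa using hs) 0
  | succ k ih =>
    refine ⟨(hconv (k + 1)).1, ?_⟩
    have hrec := (hconv (k + 1)).eq_smul_sub_of_hasDerivAt
      (fun t _ ↦ hasDerivAt_pow_succ_div_factorial k t) ih
    rw [ofReal_zero, zero_pow k.succ_ne_zero, zero_div, sub_zero, smul_eq_mul] at hrec
    rw [pow_succ, ← div_div, hrec, mul_div_cancel_left₀ _ hs0]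

theorem hasLaplaceTransform_const (c : ℂ) {s : ℂ} (hs : 0 < s.re) :
    HasLaplaceTransform (fun _ ↦ c) s (c / s) := by
  simpa [div_eq_mul_inv] using (hasLaplaceTransform_pow_div_factorial hs 0).const_smul c

end LaplaceTransform

section ExpPoly

variable {ι κ : Type*} [Fintype ι] [Fintype κ]

/-- The exponential polynomial `∑ₖ ∑ᵢ Aₖᵢ t^{i-1}/(i-1)! e^{-aₖt}`, the form taken by each of the
two branches of `W` up to a constant. As in the paper, `i` runs over `1, …, nₖ`; the values of
`A k` outside this range are irrelevant. -/
noncomputable def expPoly (a : ι → ℂ) (n : ι → ℕ) (A : ι → ℕ → ℂ) (t : ℝ) : ℂ :=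
  ∑ k, ∑ i ∈ Icc 1 (n k), A k i * ((t : ℂ) ^ (i - 1) / (i - 1).factorial) * exp (-a k * t)

theorem hasLaplaceTransform_expPoly {a : ι → ℂ} {s : ℂ} (hs : ∀ k, -(a k).re < s.re)
    (n : ι → ℕ) (A : ι → ℕ → ℂ) :
    HasLaplaceTransform (expPoly a n A) s (∑ k, ∑ i ∈ Icc 1 (n k), A k i / (s + a k) ^ i) := by
  refine .sum fun k _ ↦ .sum fun i hi ↦ ?_
  have hre : 0 < (s + a k).re := by rw [add_re]; linarith [hs k]
  have hterm := ((hasLaplaceTransform_pow_div_factorial hre (i - 1)).exp_smul).const_smul (A k i)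
  rw [Nat.sub_add_cancel (mem_Icc.mp hi).1, smul_eq_mul, mul_one_div] at hterm
  exact hterm.congr fun t _ ↦ by simp only [smul_eq_mul]; ring

theorem paper_eq_3_36_general (β : ι → ℂ) (M : ι → ℕ) (γ : κ → ℂ) (N : κ → ℕ)
    (H : ι → ℕ → ℂ) (G : κ → ℕ → ℂ) (c : ℂ) (b : ℝ) (W : ℝ → ℂ)
    (hWlt : ∀ x : ℝ, x < b → W x =
      1 - c + ∑ mm, ∑ i ∈ Icc 1 (M mm),
        H mm i * (((b - x : ℝ) : ℂ) ^ (i - 1) / ((i - 1).factorial : ℂ)) * exp (β mm * (x - b)))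
    (hWge : ∀ x : ℝ, b ≤ x → W x =
      1 + ∑ nn, ∑ i ∈ Icc 1 (N nn),
        G nn i * (((x - b : ℝ) : ℂ) ^ (i - 1) / ((i - 1).factorial : ℂ)) * exp (γ nn * (b - x)))
    (φ : ℂ) (hφβ : ∀ mm, φ.re < (β mm).re) (hφγ : ∀ nn, -(γ nn).re < φ.re) (hφ : φ.re < 0) :
    Integrable (fun x : ℝ ↦ exp (-φ * (x - b)) * (W x - 1)) ∧
    ∫ x : ℝ, exp (-φ * (x - b)) * (W x - 1)
      = ∑ mm, ∑ i ∈ Icc 1 (M mm), H mm i * (-1) ^ i / (φ - β mm) ^ i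
        + ∑ nn, ∑ i ∈ Icc 1 (N nn), G nn i / (φ + γ nn) ^ i
        + c / φ := by
  have hleft : HasLaplaceTransform (fun t ↦ W (b - t) - 1) (-φ)
      ((∑ mm, ∑ i ∈ Icc 1 (M mm), H mm i / (-φ + β mm) ^ i) + -c / -φ) := by
    refine ((hasLaplaceTransform_expPoly (by simpa using hφβ) M H).add
      (hasLaplaceTransform_const (-c) (by simpa using hφ))).congr fun t ht ↦ ?_
    simp only [expPoly, hWlt (b - t) (sub_lt_self b ht), ofReal_sub, sub_sub_cancel,
      sub_sub_cancel_left, mul_neg, neg_mul]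
    ring
  have hright : HasLaplaceTransform (fun t ↦ W (b + t) - 1) φ
      (∑ nn, ∑ i ∈ Icc 1 (N nn), G nn i / (φ + γ nn) ^ i) := by
    refine (hasLaplaceTransform_expPoly hφγ N G).congr fun t ht ↦ ?_
    simp only [expPoly, hWge (b + t) (le_add_of_nonneg_right (Set.mem_Ioi.mp ht).le), ofReal_add,
      add_sub_cancel_left, sub_add_cancel_left, mul_neg, neg_mul]
  have hsign (m : ι) (i : ℕ) :
      H m i / (-φ + β m) ^ i = H m i * (-1) ^ i / (φ - β m) ^ i := by
    rw [← mul_div_mul_right _ _ (pow_ne_zero i (neg_ne_zero.mpr one_ne_zero)), ← mul_pow]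
    ring_nf
  obtain ⟨hint, hval⟩ := hleft.integrable_and_integral_of_comp_sub_of_comp_add
    (f := fun x ↦ W x - 1) hright
  refine ⟨hint, hval.trans ?_⟩
  simp only [hsign, neg_div_neg_eq]
  ring

end ExpPoly

/-- Analytic core of the transform identity (3.36) in the proof of Corollary 3.2: the
two-sided Laplace transform of the piecewise function `W` of the form (3.1) (with `c`
playing the role of `p/ξ`) equals the partial-fraction rational function `f₁` of (3.20)
evaluated at `φ`, for `−min_n Re(γ_n) < Re(φ) < 0`. -/
theorem paper_eq_3_36 (Mp Nm : ℕ)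
    (β : Fin Mp → ℂ) (M : Fin Mp → ℕ)
    (γ : Fin Nm → ℂ) (N : Fin Nm → ℕ)
    (hβinj : Function.Injective β) (hβre : ∀ k, 0 < (β k).re) (hM : ∀ k, 1 ≤ M k)
    (hγinj : Function.Injective γ) (hγre : ∀ k, 0 < (γ k).re) (hN : ∀ k, 1 ≤ N k)
    (H : Fin Mp → ℕ → ℂ) (G : Fin Nm → ℕ → ℂ) (c : ℂ) (b : ℝ) (W : ℝ → ℂ)
    (hWlt : ∀ x : ℝ, x < b → W x =
      1 - c + ∑ mm, ∑ i ∈ Finset.Icc 1 (M mm),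
        H mm i * (((b - x : ℝ) : ℂ) ^ (i - 1) / (Nat.factorial (i - 1) : ℂ)) *
          Complex.exp (β mm * ((x : ℂ) - (b : ℂ))))
    (hWge : ∀ x : ℝ, b ≤ x → W x =
      1 + ∑ nn, ∑ i ∈ Finset.Icc 1 (N nn),
        G nn i * (((x - b : ℝ) : ℂ) ^ (i - 1) / (Nat.factorial (i - 1) : ℂ)) *
          Complex.exp (γ nn * ((b : ℂ) - (x : ℂ))))
    (φ : ℂ) (hφ1 : ∀ nn, -(γ nn).re < φ.re) (hφ2 : φ.re < 0) :
    MeasureTheory.Integrable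
      (fun x : ℝ => Complex.exp (-φ * ((x : ℂ) - (b : ℂ))) * (W x - 1)) ∧
    ∫ x : ℝ, Complex.exp (-φ * ((x : ℂ) - (b : ℂ))) * (W x - 1)
      = ∑ mm, ∑ i ∈ Finset.Icc 1 (M mm), H mm i * (-1) ^ i / (φ - β mm) ^ i
        + ∑ nn, ∑ i ∈ Finset.Icc 1 (N nn), G nn i / (φ + γ nn) ^ i
        + c / φ :=
  paper_eq_3_36_general β M γ N H G c b W hWlt hWge φ
    (fun k ↦ hφ2.trans (hβre k)) hφ1 hφ2
end
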